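/- Let G be a finite simple connected graph and let S be a Carathéodory independent set of G with |S| ≥ 2. Then in the subgraph of G induced by the cycle convex hull hull(S), no vertex has degree exactly 1 (i.e., the induced subgraph has no leaves). -/

import Mathlib

open SimpleGraph

/-- A set `S` is cycle convex in `G` if no vertex `w` outside `S` is such that the
subgraph induced by `S ∪ {w}` contains a cycle through `w`. -/
def IsCycleConvex {V : Type*} (G : SimpleGraph V) (S : Set V) : Prop :=
  ∀ w : V, w ∉ S →
    ¬ ∃ c : (G.induce (S ∪ {w})).Walk ⟨w, Set.mem_union_right S rfl⟩
        ⟨w, Set.mem_union_right S rfl⟩, c.IsCycle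

/-- The cycle convex hull of `S`: the smallest cycle convex set containing `S`. -/
def cycleHull {V : Type*} (G : SimpleGraph V) (S : Set V) : Set V :=
  ⋂₀ {T : Set V | S ⊆ T ∧ IsCycleConvex G T}

/-- `S` is Carathéodory independent in the cycle convexity of `G`. -/
def CIndep {V : Type*} (G : SimpleGraph V) (S : Set V) : Prop :=
  ∃ p ∈ cycleHull G S, ∀ a ∈ S, p ∉ cycleHull G (S \ {a})

/-- The Carathéodory number of `G` in the cycle convexity. -/
noncomputable def carNumber {V : Type*} (G : SimpleGraph V) : ℕ :=
  sSup {n : ℕ | ∃ S : Set V, CIndep G S ∧ S.ncard = n}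

/-!
Every vertex `v` of `H = hull(S)` lies on a cycle inside `H`. Suppose not. Since `H \ {v}` is then
still convex, minimality of the hull gives `v ∈ S`. Adding `v` to the convex set `hull(S \ {v})`
creates no cycle through `v`, hence yields a convex set containing `S`, so
`H ⊆ hull(S \ {v}) ∪ {v}`. This forces the vertex `p` witnessing the independence of `S` to be `v`.
But `S` has another element `a`, and `v ∈ S \ {a}`, contradicting `p ∉ hull(S \ {a})`.
-/

/-- The vertex `v` lies on a cycle of `G` all of whose vertices belong to `H`. Cycles are taken in
`G`, rather than in the induced subgraph on `H`, so that `H` can vary without transporting walks. -/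
def LiesOnCycleIn {V : Type*} (G : SimpleGraph V) (H : Set V) (v : V) : Prop :=
  ∃ c : G.Walk v v, c.IsCycle ∧ ∀ x ∈ c.support, x ∈ H

section

variable {V : Type*} {G : SimpleGraph V} {H S T : Set V} {v w : V}

theorem nontrivial_neighborSet_of_isCycle {c : G.Walk v v} (hc : c.IsCycle) :
    (G.neighborSet v).Nontrivial :=
  ⟨c.snd, c.adj_snd hc.not_nil, c.penultimate, (c.adj_penultimate hc.not_nil).symm,
    hc.snd_ne_penultimate⟩

theorem exists_isCycle_induce_iff (v : H) :
    (∃ c : (G.induce H).Walk v v, c.IsCycle) ↔ LiesOnCycleIn G H v := by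
  constructor
  · rintro ⟨c, hc⟩
    refine ⟨c.map (Embedding.induce H).toHom, hc.map Subtype.val_injective, fun x hx => ?_⟩
    obtain ⟨y, -, rfl⟩ := List.mem_map.1 (Walk.support_map _ c ▸ hx)
    exact y.2
  · rintro ⟨c, hc, hcH⟩
    refine ⟨c.induce H hcH, Walk.IsCycle.of_map (f := (Embedding.induce H).toHom) ?_⟩
    rwa [Walk.map_induce]

namespace LiesOnCycleIn

theorem mono (hv : LiesOnCycleIn G S v) (hST : S ⊆ T) : LiesOnCycleIn G T v :=
  let ⟨c, hc, hcS⟩ := hv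
  ⟨c, hc, fun x hx => hST (hcS x hx)⟩

theorem sdiff_singleton (hw : LiesOnCycleIn G H w) (hv : ¬ LiesOnCycleIn G H v) :
    LiesOnCycleIn G (H \ {v}) w := by
  classical
  obtain ⟨c, hc, hcH⟩ := hw
  refine ⟨c, hc, fun x hx => ⟨hcH x hx, ?_⟩⟩
  rintro rfl
  exact hv ⟨c.rotate x hx, hc.rotate hx, fun y hy => hcH y ((c.mem_support_rotate_iff x hx).1 hy)⟩

end LiesOnCycleIn

theorem isCycleConvex_iff :
    IsCycleConvex G S ↔ ∀ w, LiesOnCycleIn G (insert w S) w → w ∈ S := by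
  refine forall_congr' fun w => ?_
  simp only [exists_isCycle_induce_iff, Set.union_singleton, not_imp_not]

theorem isCycleConvex_sInter {𝒯 : Set (Set V)} (h𝒯 : ∀ T ∈ 𝒯, IsCycleConvex G T) :
    IsCycleConvex G (⋂₀ 𝒯) :=
  isCycleConvex_iff.2 fun w hw T hT => isCycleConvex_iff.1 (h𝒯 T hT) w <|
    hw.mono (Set.insert_subset_insert (Set.sInter_subset_of_mem hT))

theorem subset_cycleHull (G : SimpleGraph V) (S : Set V) : S ⊆ cycleHull G S :=
  Set.subset_sInter fun _ hT => hT.1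

theorem cycleHull_subset (hST : S ⊆ T) (hT : IsCycleConvex G T) : cycleHull G S ⊆ T :=
  Set.sInter_subset_of_mem ⟨hST, hT⟩

theorem isCycleConvex_cycleHull (G : SimpleGraph V) (S : Set V) :
    IsCycleConvex G (cycleHull G S) :=
  isCycleConvex_sInter fun _ hT => hT.2

theorem cycleHull_mono (hST : S ⊆ T) : cycleHull G S ⊆ cycleHull G T :=
  cycleHull_subset (hST.trans (subset_cycleHull G T)) (isCycleConvex_cycleHull G T)

namespace IsCycleConvex

theorem of_subset_of_forall_mem (hH : IsCycleConvex G H) (hTH : T ⊆ H)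
    (hT : ∀ w ∈ H, LiesOnCycleIn G (insert w T) w → w ∈ T) : IsCycleConvex G T :=
  isCycleConvex_iff.2 fun w hw =>
    hT w (isCycleConvex_iff.1 hH w (hw.mono (Set.insert_subset_insert hTH))) hw

theorem sdiff_singleton (hH : IsCycleConvex G H) (hv : ¬ LiesOnCycleIn G H v) :
    IsCycleConvex G (H \ {v}) := by
  refine hH.of_subset_of_forall_mem Set.sdiff_subset fun w hwH hw => ⟨hwH, ?_⟩
  rintro rfl
  exact hv (hw.mono (Set.insert_subset hwH Set.sdiff_subset))

theorem insert_of_not_liesOnCycleIn (hT : IsCycleConvex G T) (hH : IsCycleConvex G H)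
    (hTH : insert v T ⊆ H) (hv : ¬ LiesOnCycleIn G H v) : IsCycleConvex G (insert v T) := by
  refine hH.of_subset_of_forall_mem hTH fun w hwH hw => Or.inr (isCycleConvex_iff.1 hT w ?_)
  have hvw : ¬ LiesOnCycleIn G (insert w (insert v T)) v := fun h =>
    hv (h.mono (Set.insert_subset hwH hTH))
  refine (hw.sdiff_singleton hvw).mono ?_
  rw [Set.insert_comm, Set.sdiff_singleton_subset_iff]

end IsCycleConvex

theorem mem_of_mem_cycleHull_of_not_liesOnCycleIn (hvH : v ∈ cycleHull G S)
    (hv : ¬ LiesOnCycleIn G (cycleHull G S) v) : v ∈ S := by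
  by_contra hvS
  have hS : S ⊆ cycleHull G S \ {v} := Set.subset_sdiff_singleton (subset_cycleHull G S) hvS
  exact (cycleHull_subset hS ((isCycleConvex_cycleHull G S).sdiff_singleton hv) hvH).2 rfl

theorem cycleHull_subset_insert_cycleHull_sdiff (hvH : v ∈ cycleHull G S)
    (hv : ¬ LiesOnCycleIn G (cycleHull G S) v) :
    cycleHull G S ⊆ insert v (cycleHull G (S \ {v})) := by
  have hsub : insert v (cycleHull G (S \ {v})) ⊆ cycleHull G S :=
    Set.insert_subset hvH (cycleHull_mono Set.sdiff_subset)
  exact cycleHull_subset (Set.sdiff_singleton_subset_iff.1 (subset_cycleHull G _))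
    ((isCycleConvex_cycleHull G _).insert_of_not_liesOnCycleIn (isCycleConvex_cycleHull G S)
      hsub hv)

theorem CIndep.liesOnCycleIn_cycleHull (hS : CIndep G S) (hnt : S.Nontrivial)
    (hvH : v ∈ cycleHull G S) : LiesOnCycleIn G (cycleHull G S) v := by
  by_contra hv
  obtain ⟨p, hpS, hp⟩ := hS
  have hvS : v ∈ S := mem_of_mem_cycleHull_of_not_liesOnCycleIn hvH hv
  obtain rfl : p = v :=
    (cycleHull_subset_insert_cycleHull_sdiff hvH hv hpS).resolve_right (hp v hvS)
  obtain ⟨a, haS, hap⟩ := hnt.exists_ne p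
  exact hp a haS (subset_cycleHull G _ ⟨hvS, hap.symm⟩)

end

theorem stmt_4_general {V : Type*} (G : SimpleGraph V) (S : Set V) (hS : CIndep G S)
    (hnt : S.Nontrivial) (v : cycleHull G S) :
    ∃ c : (G.induce (cycleHull G S)).Walk v v, c.IsCycle :=
  (exists_isCycle_induce_iff v).2 (hS.liesOnCycleIn_cycleHull hnt v.2)

/-- Lemma 1(f): the cycle convex hull of a Caratheodory independent set of size at
least 2 induces a subgraph with no vertex of degree exactly one. -/
theorem stmt_4 {V : Type*} [Fintype V] (G : SimpleGraph V) (hG : G.Connected)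
    (S : Set V) (hS : CIndep G S) (h2 : 2 ≤ S.ncard) :
    ∀ v : cycleHull G S, ((G.induce (cycleHull G S)).neighborSet v).ncard ≠ 1 := by
  intro v
  obtain ⟨c, hc⟩ := stmt_4_general G S hS (Set.one_lt_ncard_iff_nontrivial.1 h2) v
  exact (Set.one_lt_ncard_iff_nontrivial.2 (nontrivial_neighborSet_of_isCycle hc)).ne'
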